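/- Let C₁ be a ZMod p-linear subspace of (Fin n → ZMod p) and C₁^⊥ = {v | ∀ c ∈ C₁, ⟨v,c⟩ = 0}. For any a, b ∈ (Fin n → ZMod p), the error operator D(a,b) commutes with D(y,0) for every y ∈ C₁ if and only if b ∈ C₁^⊥. -/

import Mathlib

/-!
Both products shift by `a + y`: `D(a,b) D(y,0)|z⟩ = ω^⟨b,z+y⟩ |z+y+a⟩` while
`D(y,0) D(a,b)|z⟩ = ω^⟨b,z⟩ |z+a+y⟩` (`errD_mul_apply`). Since `ω` has order exactly `p`, the
exponents may be compared in `ZMod p` (`omg_pow_val_inj`), so the two operators commute iff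
`⟨b,z+y⟩ = ⟨b,z⟩` for all `z`, i.e. iff `⟨b,y⟩ = 0`.
-/

/-- The primitive `p`-th root of unity `ω = exp(2πi/p)`. -/
noncomputable def omg (p : ℕ) : ℂ := Complex.exp (2 * Real.pi * Complex.I / p)

/-- The inner product `⟨u,v⟩ = ∑ i, u i * v i` on `(Fin n → ZMod p)`. -/
def ip {p n : ℕ} (u v : Fin n → ZMod p) : ZMod p := ∑ i, u i * v i

/-- The error operator `D(a,b)`, the matrix of
`X(a₁)Z(b₁) ⊗ ⋯ ⊗ X(aₙ)Z(bₙ)`, acting as `D(a,b)|y⟩ = ω^⟨b,y⟩ |y + a⟩`. -/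
noncomputable def errD {p n : ℕ} (a b : Fin n → ZMod p) :
    Matrix (Fin n → ZMod p) (Fin n → ZMod p) ℂ :=
  fun x y => if x = y + a then omg p ^ (ip b y).val else 0

theorem omg_pow_val_inj {p : ℕ} [Fact p.Prime] {s t : ZMod p}
    (h : omg p ^ s.val = omg p ^ t.val) : s = t :=
  ZMod.val_injective p <|
    (Complex.isPrimitiveRoot_exp p (NeZero.ne p)).pow_inj (ZMod.val_lt s) (ZMod.val_lt t) h

theorem ip_add_right {p n : ℕ} (u v w : Fin n → ZMod p) : ip u (v + w) = ip u v + ip u w := by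
  simp [ip, mul_add, Finset.sum_add_distrib]

theorem errD_mul_apply {p : ℕ} [Fact p.Prime] {n : ℕ} (a b c d x z : Fin n → ZMod p) :
    (errD a b * errD c d) x z =
      if x = z + c + a then omg p ^ (ip b (z + c)).val * omg p ^ (ip d z).val else 0 := by
  rw [Matrix.mul_apply, Finset.sum_eq_single (z + c)]
  · simp [errD]
  · intro w _ hw
    simp [errD, hw]
  · simp

theorem errD_commute_flip_iff {p : ℕ} [Fact p.Prime] {n : ℕ} (a b y : Fin n → ZMod p) :
    Commute (errD a b) (errD y (0 : Fin n → ZMod p)) ↔ ip b y = 0 := by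
  have h0 : ∀ z : Fin n → ZMod p, ip 0 z = 0 := fun z => by simp [ip]
  constructor
  · intro h
    -- The matrix entry in column `|0⟩` already determines `⟨b,y⟩`.
    have h1 := congrFun (congrFun h.eq (y + a)) 0
    rw [errD_mul_apply, errD_mul_apply, if_pos (by simp), if_pos (by simp [add_comm])] at h1
    simp only [h0, zero_add, ZMod.val_zero, pow_zero, mul_one, one_mul] at h1
    rw [omg_pow_val_inj h1]
    simp [ip]
  · intro h
    ext x z
    rw [errD_mul_apply, errD_mul_apply, add_right_comm z y a]
    simp [h0, ip_add_right, h]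

/-- `D(a,b)` commutes with `D(y,0)` for every `y ∈ C₁` iff `b ∈ C₁^⊥`. -/
theorem errD_commute_with_flip_generators_iff (p : ℕ) [Fact p.Prime] (n : ℕ)
    (hn : 1 ≤ n) (C₁ : Submodule (ZMod p) (Fin n → ZMod p))
    (a b : Fin n → ZMod p) :
    (∀ y ∈ C₁, Commute (errD a b) (errD y (0 : Fin n → ZMod p))) ↔
      b ∈ {v : Fin n → ZMod p | ∀ c ∈ C₁, ip v c = 0} := by
  simp only [errD_commute_flip_iff, Set.mem_ofPred_eq]
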